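/- Let S be a splayed sequence of Reeb domains of length k with type data (t_1,...,t_{k+1}). Then there exists a unique splayed sequence of Reeb domains U with the same length k and the same type data such that [U] = [S] in the group G and the associated sequence of Reeb chords rho(U) is 123-reduced; moreover rho(U) equals the 123-reduction of rho(S). -/

import Mathlib

/-! ## The torus algebra -/

/-- The two idempotents of the torus algebra. -/
inductive Idem : Type
  | m | l
deriving DecidableEq

/-- Reeb chords of the torus algebra. -/
inductive Chord : Type
  | r1 | r2 | r3 | r12 | r23 | r123
deriving DecidableEq

open Chord

/-- The idempotent `ι` with `ι * ρ = ρ`. -/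
def iotaStart : Chord → Idem
  | r1 => Idem.m | r2 => Idem.l | r3 => Idem.m
  | r12 => Idem.m | r23 => Idem.l | r123 => Idem.m

/-- The idempotent `ι` with `ρ * ι = ρ`. -/
def iotaEnd : Chord → Idem
  | r1 => Idem.l | r2 => Idem.m | r3 => Idem.l
  | r12 => Idem.m | r23 => Idem.l | r123 => Idem.l

/-- A chord is jumping if its starting and ending idempotents differ. -/
def Jumping (c : Chord) : Prop := iotaStart c ≠ iotaEnd c

/-- The partial product of Reeb chords (`none` encodes product zero). -/
def mul? : Chord → Chord → Option Chord
  | r1, r2 => some r12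
  | r2, r3 => some r23
  | r1, r23 => some r123
  | r12, r3 => some r123
  | _, _ => none

/-- A 123-reduction step: replace an adjacent 123-composable pair by `ρ₁₂₃`. -/
inductive Step123 : List Chord → List Chord → Prop
  | mk (pre post : List Chord) (a b : Chord) (hab : mul? a b = some r123) :
      Step123 (pre ++ a :: b :: post) (pre ++ r123 :: post)

/-- A sequence is 123-reduced if no 123-reduction step applies. -/
def Reduced123 (s : List Chord) : Prop := ∀ t, ¬ Step123 s t

/-- The lower endpoint (0-based quadrant index) of the interval of a chord. -/
def loIdx : Chord → Fin 3
  | r1 => 0 | r2 => 1 | r3 => 2 | r12 => 0 | r23 => 1 | r123 => 0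

/-- The upper endpoint (0-based quadrant index) of the interval of a chord. -/
def hiIdx : Chord → Fin 3
  | r1 => 0 | r2 => 1 | r3 => 2 | r12 => 1 | r23 => 2 | r123 => 2

/-- The non-jumping chord `π_ι` associated to an idempotent: `π_{ι_m} = ρ₁₂`,
`π_{ι_l} = ρ₂₃`. -/
def piIdem : Idem → Chord
  | Idem.m => r12
  | Idem.l => r23

/-! ## Splayed sequences of Reeb domains -/

/-- A splayed sequence of Reeb domains of length `k`: jumping chords `r 0, …, r (k-1)` with
matching idempotents, and nonnegative multiplicities `n 0, …, n k`. -/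
structure SplayedSeq (k : ℕ) where
  n : Fin (k + 1) → ℕ
  r : Fin k → Chord
  jump : ∀ i, Jumping (r i)
  coh : ∀ (i : ℕ) (h1 : i < k) (h2 : i + 1 < k), iotaEnd (r ⟨i, h1⟩) = iotaStart (r ⟨i + 1, h2⟩)

/-- The type data of a splayed sequence: `t i = iotaStart (r i)` for `i < k` and
`t k = iotaEnd (r (k-1))`. -/
def typeData {k : ℕ} (S : SplayedSeq k) (i : Fin (k + 1)) : Idem :=
  if h : (i : ℕ) < k then iotaStart (S.r ⟨i, h⟩)
  else if hk : 0 < k then iotaEnd (S.r ⟨k - 1, by omega⟩)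
  else Idem.m

/-- The sequence of Reeb chords associated to a splayed sequence of Reeb domains: for
`i = 0,…,k` in order, `n i` copies of `π_{t i}` followed (when `i < k`) by `r i`. -/
def rhoList {k : ℕ} (S : SplayedSeq k) : List Chord :=
  ((List.finRange (k + 1)).map (fun a =>
    List.replicate (S.n a) (piIdem (typeData S a)) ++
      if h : (a : ℕ) < k then [S.r ⟨a, h⟩] else [])).flatten

/-- The free abelian group on the quadrant generators `Q^i_t`, `0 ≤ i < k`, `t ∈ {1,2,3}`. -/
abbrev FreeG (k : ℕ) := (Fin k × Fin 3) →₀ ℤ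

/-- The relation vector identifying the half-disk classes of consecutive rows `a`, `a+1`,
depending on the type of the curve `δ^{a+1}` between them. -/
noncomputable def relVec (k : ℕ) (t : Fin (k + 1) → Idem) (a : ℕ) (h : a + 1 < k) : FreeG k :=
  if t ⟨a + 1, by omega⟩ = Idem.m then
    (Finsupp.single (⟨a, by omega⟩, (0 : Fin 3)) 1 + Finsupp.single (⟨a, by omega⟩, (1 : Fin 3)) 1)
      - (Finsupp.single (⟨a + 1, h⟩, (0 : Fin 3)) 1 + Finsupp.single (⟨a + 1, h⟩, (1 : Fin 3)) 1)
  else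
    (Finsupp.single (⟨a, by omega⟩, (1 : Fin 3)) 1 + Finsupp.single (⟨a, by omega⟩, (2 : Fin 3)) 1)
      - (Finsupp.single (⟨a + 1, h⟩, (1 : Fin 3)) 1 + Finsupp.single (⟨a + 1, h⟩, (2 : Fin 3)) 1)

/-- The set of defining relations of the group `G`. -/
def relSet (k : ℕ) (t : Fin (k + 1) → Idem) : Set (FreeG k) :=
  { x | ∃ (a : ℕ) (h : a + 1 < k), x = relVec k t a h }

/-- The group `G`: the abelian group generated by the quadrant classes `Q^i_t` subject to
the half-disk relations determined by the type data `t`. -/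
abbrev G (k : ℕ) (t : Fin (k + 1) → Idem) :=
  FreeG k ⧸ Submodule.span ℤ (relSet k t)

/-- The quadrant generator `Q^i_t` in `G`. -/
noncomputable def Qgen (k : ℕ) (t : Fin (k + 1) → Idem) (i : Fin k) (q : Fin 3) : G k t :=
  Submodule.Quotient.mk (Finsupp.single (i, q) 1)

/-- The class `B^i(ρ)` of a chord `ρ = ρ_{[s,e]}`: the sum of the quadrants `Q^i_s,…,Q^i_e`. -/
noncomputable def Bclass (k : ℕ) (t : Fin (k + 1) → Idem) (i : Fin k) (c : Chord) : G k t :=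
  ∑ q : Fin 3, if loIdx c ≤ q ∧ q ≤ hiIdx c then Qgen k t i q else 0

/-- The half-disk class `H^i` of the curve `δ^{i+1}` (0-based curve index `a ∈ {0,…,k}`,
using row `min a (k-1)`). -/
noncomputable def Hclass (k : ℕ) (t : Fin (k + 1) → Idem) (a : Fin (k + 1)) : G k t :=
  if hk : 0 < k then
    let b : Fin k := ⟨min (a : ℕ) (k - 1), by omega⟩
    if t a = Idem.m then Qgen k t b 0 + Qgen k t b 1 else Qgen k t b 1 + Qgen k t b 2
  else 0

/-- The total class `[S] = ∑ n_i • H^i + ∑ B^i(r_i)` of a splayed sequence of Reeb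
domains. -/
noncomputable def totalClass (k : ℕ) (t : Fin (k + 1) → Idem) (S : SplayedSeq k) : G k t :=
  (∑ a : Fin (k + 1), (S.n a) • Hclass k t a) + ∑ i : Fin k, Bclass k t i (S.r i)

namespace Splayed

theorem eq_l {x y : Idem} (h : x ≠ y) (hy : y = Idem.m) : x = Idem.l := by
  subst hy; cases x
  · exact absurd rfl h
  · rfl

theorem eq_m {x y : Idem} (h : x ≠ y) (hy : ¬ y = Idem.m) : x = Idem.m := by
  cases x
  · rfl
  · cases y
    · exact absurd rfl hy
    · exact absurd rfl h

theorem td_castSucc {k : ℕ} (S : SplayedSeq k) (i : Fin k) :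
    typeData S i.castSucc = iotaStart (S.r i) := by
  simp [typeData]

theorem td_succ {k : ℕ} (S : SplayedSeq k) (i : Fin k) :
    typeData S i.succ = iotaEnd (S.r i) := by
  unfold typeData
  split_ifs with h h'
  · have := S.coh i.1 i.2 (by simpa using h)
    simpa using this.symm
  · have hi : i.1 = k - 1 := by simp at h; omega
    congr 2
    exact Fin.ext hi.symm
  · exact absurd i.2 (by omega)

theorem td_alt {k : ℕ} (S : SplayedSeq k) (i : Fin k) :
    typeData S i.castSucc ≠ typeData S i.succ := by
  rw [td_castSucc, td_succ]; exact S.jump i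

/-- The half-disk class of a curve of type `τ`, computed in row `i`. -/
noncomputable def half (k : ℕ) (t : Fin (k + 1) → Idem) (τ : Idem) (i : Fin k) : G k t :=
  if τ = Idem.m then Qgen k t i 0 + Qgen k t i 1 else Qgen k t i 1 + Qgen k t i 2

theorem H_castSucc {k : ℕ} (t : Fin (k + 1) → Idem) (i : Fin k) :
    Hclass k t i.castSucc = half k t (t i.castSucc) i := by
  have hk : 0 < k := by have := i.2; omega
  have hb : (⟨min (i.castSucc : ℕ) (k - 1), by omega⟩ : Fin k) = i := by
    apply Fin.ext; have := i.2; simp; omega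
  simp only [Hclass, hk, dif_pos, hb, half]

theorem H_succ {k : ℕ} (t : Fin (k + 1) → Idem) (i : Fin k) :
    Hclass k t i.succ = half k t (t i.succ) i := by
  have hk : 0 < k := by have := i.2; omega
  by_cases h : i.1 + 1 < k
  · have hb : (⟨min (i.succ : ℕ) (k - 1), by omega⟩ : Fin k) = ⟨i.1 + 1, h⟩ := by
      apply Fin.ext; simp; omega
    simp only [Hclass, hk, dif_pos, hb, half]
    have hrel : relVec k t i.1 h ∈ Submodule.span ℤ (relSet k t) :=
      Submodule.subset_span ⟨i.1, h, rfl⟩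
    have ht : (⟨i.1 + 1, by omega⟩ : Fin (k + 1)) = i.succ := rfl
    unfold relVec at hrel
    rw [ht] at hrel
    split_ifs with hm
    · rw [if_pos hm] at hrel
      exact ((Submodule.Quotient.eq _).2 hrel).symm
    · rw [if_neg hm] at hrel
      exact ((Submodule.Quotient.eq _).2 hrel).symm
  · have hb : (⟨min (i.succ : ℕ) (k - 1), by omega⟩ : Fin k) = i := by
      apply Fin.ext; have := i.2; simp; omega
    simp only [Hclass, hk, dif_pos, hb, half]

theorem B_r1 {k : ℕ} (t : Fin (k + 1) → Idem) (i : Fin k) :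
    Bclass k t i r123 = Bclass k t i r1 + half k t Idem.l i := by
  simp [Bclass, half, Fin.sum_univ_three, loIdx, hiIdx]
  abel

theorem B_r3 {k : ℕ} (t : Fin (k + 1) → Idem) (i : Fin k) :
    Bclass k t i r123 = Bclass k t i r3 + half k t Idem.m i := by
  simp [Bclass, half, Fin.sum_univ_three, loIdx, hiIdx]
  abel

/-! ### Functionals on `G` -/

/-- The outer quadrant of a half-disk type. -/
def outer : Idem → Fin 3
  | Idem.m => 0
  | Idem.l => 2

def wt {k : ℕ} (t : Fin (k + 1) → Idem) (a : Fin (k + 1)) (p : Fin k × Fin 3) : ℤ :=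
  if (p.1.castSucc = a ∨ p.1.succ = a) ∧ p.2 = outer (t a) then 1 else 0

theorem wt_rel {k : ℕ} (t : Fin (k + 1) → Idem)
    (ht : ∀ i : Fin k, t i.castSucc ≠ t i.succ) (a : Fin (k + 1)) (b : ℕ) (h : b + 1 < k) :
    Finsupp.linearCombination ℤ (wt t a) (relVec k t b h) = 0 := by
  have h1 := ht ⟨b, by omega⟩
  have h2 := ht ⟨b + 1, h⟩
  have e : (Fin.succ ⟨b, by omega⟩ : Fin (k + 1)) = Fin.castSucc ⟨b + 1, h⟩ := rfl
  have e' : (⟨b + 1, by omega⟩ : Fin (k + 1)) = Fin.castSucc ⟨b + 1, h⟩ := rfl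
  unfold relVec
  rw [e']
  rw [e] at h1
  by_cases h3 : a = Fin.castSucc ⟨b + 1, h⟩
  · subst h3
    split_ifs with hm <;> simp [wt, e, outer]
  · have h4 : ¬ (Fin.castSucc ⟨b + 1, h⟩ = a) := fun h => h3 h.symm
    by_cases h5 : Fin.castSucc (⟨b, by omega⟩ : Fin k) = a
    · subst h5
      have h6 : ¬ (Fin.succ (⟨b + 1, h⟩ : Fin k) = Fin.castSucc ⟨b, by omega⟩) := by
        simp [Fin.ext_iff]; omega
      split_ifs with hm
      · have : t (Fin.castSucc ⟨b, by omega⟩) = Idem.l := eq_l h1 hm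
        simp only [map_sub, map_add, Finsupp.linearCombination_single, wt, e, h4, h6, this, outer]
        simp
      · have : t (Fin.castSucc ⟨b, by omega⟩) = Idem.m := eq_m h1 hm
        simp only [map_sub, map_add, Finsupp.linearCombination_single, wt, e, h4, h6, this, outer]
        simp
    · by_cases h6 : Fin.succ (⟨b + 1, h⟩ : Fin k) = a
      · subst h6
        split_ifs with hm
        · have : t (Fin.succ ⟨b + 1, h⟩) = Idem.l := eq_l h2.symm hm
          simp only [map_sub, map_add, Finsupp.linearCombination_single, wt, e, h4, h5, this, outer]
          simp
        · have : t (Fin.succ ⟨b + 1, h⟩) = Idem.m := eq_m h2.symm hm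
          simp only [map_sub, map_add, Finsupp.linearCombination_single, wt, e, h4, h5, this, outer]
          simp
      · split_ifs with hm <;>
          simp only [map_sub, map_add, Finsupp.linearCombination_single, wt, e, h4, h5, h6] <;> simp

noncomputable def phi {k : ℕ} (t : Fin (k + 1) → Idem)
    (ht : ∀ i : Fin k, t i.castSucc ≠ t i.succ) (a : Fin (k + 1)) : G k t →ₗ[ℤ] ℤ :=
  Submodule.liftQ _ (Finsupp.linearCombination ℤ (wt t a)) (by
    rw [Submodule.span_le]
    rintro x ⟨b, h, rfl⟩
    exact wt_rel t ht a b h)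

theorem phi_Q {k : ℕ} (t : Fin (k + 1) → Idem)
    (ht : ∀ i : Fin k, t i.castSucc ≠ t i.succ) (a : Fin (k + 1)) (i : Fin k) (q : Fin 3) :
    phi t ht a (Qgen k t i q) = wt t a (i, q) := by
  have : phi t ht a (Qgen k t i q) =
      Finsupp.linearCombination ℤ (wt t a) (Finsupp.single (i, q) 1) := rfl
  rw [this]; simp

theorem phi_half {k : ℕ} (t : Fin (k + 1) → Idem)
    (ht : ∀ i : Fin k, t i.castSucc ≠ t i.succ) (a : Fin (k + 1)) (i : Fin k) (τ : Idem) :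
    phi t ht a (half k t τ i) =
      if (i.castSucc = a ∨ i.succ = a) ∧ τ = t a then 1 else 0 := by
  unfold half
  by_cases h : i.castSucc = a ∨ i.succ = a
  · cases τ <;> cases h' : t a <;> simp [phi_Q, wt, h, h', outer]
  · cases τ <;> simp [phi_Q, wt, h]

theorem phi_H {k : ℕ} (hk : 0 < k) (t : Fin (k + 1) → Idem)
    (ht : ∀ i : Fin k, t i.castSucc ≠ t i.succ) (a b : Fin (k + 1)) :
    phi t ht a (Hclass k t b) = if b = a then 1 else 0 := by
  by_cases hb : b.1 < k
  · obtain ⟨j, rfl⟩ : ∃ j : Fin k, b = j.castSucc := ⟨⟨b.1, hb⟩, rfl⟩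
    rw [H_castSucc, phi_half]
    congr 1
    apply propext
    constructor
    · rintro ⟨h | h, h'⟩
      · exact h
      · subst h; exact absurd h' (ht j)
    · rintro rfl; exact ⟨Or.inl rfl, rfl⟩
  · obtain ⟨j, rfl⟩ : ∃ j : Fin k, b = j.succ := by
      refine ⟨⟨k - 1, by omega⟩, Fin.ext ?_⟩
      have := b.2; simp; omega
    rw [H_succ, phi_half]
    congr 1
    apply propext
    constructor
    · rintro ⟨h | h, h'⟩
      · subst h; exact absurd h'.symm (ht j)
      · exact h
    · rintro rfl; exact ⟨Or.inr rfl, rfl⟩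

theorem phi_total {k : ℕ} (hk : 0 < k) (t : Fin (k + 1) → Idem)
    (ht : ∀ i : Fin k, t i.castSucc ≠ t i.succ) (a : Fin (k + 1)) (S : SplayedSeq k) :
    phi t ht a (totalClass k t S) =
      S.n a + ∑ i, phi t ht a (Bclass k t i (S.r i)) := by
  unfold totalClass
  rw [map_add, map_sum, map_sum]
  congr 1
  simp [phi_H hk]

theorem phi_B {k : ℕ} (t : Fin (k + 1) → Idem)
    (ht : ∀ i : Fin k, t i.castSucc ≠ t i.succ) (a : Fin (k + 1)) (i : Fin k) (c : Chord) :
    phi t ht a (Bclass k t i c) =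
      if (i.castSucc = a ∨ i.succ = a) ∧ loIdx c ≤ outer (t a) ∧ outer (t a) ≤ hiIdx c
      then 1 else 0 := by
  unfold Bclass
  by_cases h : i.castSucc = a ∨ i.succ = a
  · cases c <;> cases h' : t a <;>
      simp [phi_Q, wt, h, h', outer, Fin.sum_univ_three, loIdx, hiIdx]
  · rw [map_sum, if_neg (by tauto)]
    apply Finset.sum_eq_zero
    intro q _
    split_ifs
    · simp [phi_Q, wt, h]
    · simp

/-- Chords leaving `ι_l` and jumping are `ρ₂`. -/
theorem eq_r2 {c : Chord} (hc : Jumping c) (h : iotaStart c = Idem.l) : c = r2 := by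
  cases c <;> simp_all [Jumping, iotaStart, iotaEnd]

theorem phi_m1 {k : ℕ} (hk : 0 < k) (S : SplayedSeq k) (t : Fin (k + 1) → Idem)
    (ht : ∀ i : Fin k, t i.castSucc ≠ t i.succ) (hS : typeData S = t)
    (i : Fin k) (hi : t i.castSucc = Idem.m) :
    phi t ht i.castSucc (totalClass k t S) = S.n i.castSucc + if S.r i = r3 then 0 else 1 := by
  rw [phi_total hk, Finset.sum_eq_single i]
  · rw [phi_B]
    have hj := S.jump i
    have hs := td_castSucc S i
    rw [hS, hi] at hs
    congr 1
    rw [hi]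
    generalize S.r i = c at hj hs
    clear ht
    cases c <;> simp [Jumping, iotaStart, iotaEnd, outer, loIdx, hiIdx] at hj hs ⊢
  · intro j _ hji
    rw [phi_B, if_neg]
    rintro ⟨h | h, h2⟩
    · exact hji (Fin.castSucc_injective _ h)
    · have hj := S.jump j
      have h3 := ht j
      rw [h, hi] at h3
      have h4 := td_castSucc S j
      rw [hS] at h4
      have h5 : iotaStart (S.r j) = Idem.l := by
        rw [← h4]; exact eq_l h3 rfl
      rw [eq_r2 hj h5, hi] at h2
      simp [loIdx, hiIdx, outer] at h2
  · simp

theorem phi_m2 {k : ℕ} (hk : 0 < k) (S : SplayedSeq k) (t : Fin (k + 1) → Idem)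
    (ht : ∀ i : Fin k, t i.castSucc ≠ t i.succ) (hS : typeData S = t)
    (i : Fin k) (hi : t i.castSucc = Idem.m) :
    phi t ht i.succ (totalClass k t S) = S.n i.succ + if S.r i = r1 then 0 else 1 := by
  have hl : t i.succ = Idem.l := eq_l (ht i).symm hi
  rw [phi_total hk, Finset.sum_eq_single i]
  · rw [phi_B]
    have hj := S.jump i
    have hs := td_castSucc S i
    rw [hS, hi] at hs
    congr 1
    rw [hl]
    generalize S.r i = c at hj hs
    clear ht
    cases c <;> simp [Jumping, iotaStart, iotaEnd, outer, loIdx, hiIdx] at hj hs ⊢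
  · intro j _ hji
    rw [phi_B, if_neg]
    rintro ⟨h | h, h2⟩
    · have hj := S.jump j
      have h4 := td_castSucc S j
      rw [hS, h, hl] at h4
      rw [eq_r2 hj h4.symm, hl] at h2
      simp [loIdx, hiIdx, outer] at h2
    · exact hji (Fin.succ_injective _ h)
  · simp

/-- Local form of being 123-reduced. -/
def LR {k : ℕ} (S : SplayedSeq k) : Prop :=
  ∀ i : Fin k, (S.r i = r1 → S.n i.succ = 0) ∧ (S.r i = r3 → S.n i.castSucc = 0)

theorem LR_unique {k : ℕ} (hk : 0 < k) (U V : SplayedSeq k) (t : Fin (k + 1) → Idem)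
    (hU : typeData U = t) (hV : typeData V = t)
    (hUV : totalClass k t U = totalClass k t V) (lU : LR U) (lV : LR V) : U = V := by
  have ht : ∀ i : Fin k, t i.castSucc ≠ t i.succ := by
    intro i; rw [← hU]; exact td_alt U i
  have hr : U.r = V.r := by
    funext i
    have sU := td_castSucc U i
    have sV := td_castSucc V i
    rw [hU] at sU
    rw [hV] at sV
    have jU := U.jump i
    have jV := V.jump i
    cases hi : t i.castSucc
    · have e1 := phi_m1 hk U t ht hU i hi
      have e2 := phi_m2 hk U t ht hU i hi
      rw [hUV, phi_m1 hk V t ht hV i hi] at e1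
      rw [hUV, phi_m2 hk V t ht hV i hi] at e2
      have lU := lU i
      have lV := lV i
      rw [hi] at sU sV
      generalize U.r i = c at *
      generalize V.r i = d at *
      generalize U.n i.succ = n1 at *
      generalize V.n i.succ = n2 at *
      generalize U.n i.castSucc = n3 at *
      generalize V.n i.castSucc = n4 at *
      clear hUV hU hV ht
      cases c <;> cases d <;>
        simp [Jumping, iotaStart, iotaEnd] at * <;> omega
    · rw [eq_r2 jU (by rw [← sU, hi]), eq_r2 jV (by rw [← sV, hi])]
  have hn : U.n = V.n := by
    funext a
    have e1 := phi_total hk t ht a U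
    rw [hUV, phi_total hk t ht a V, hr] at e1
    have := add_right_cancel e1
    exact_mod_cast this.symm
  cases U; cases V
  simp_all

/-! ### Lists -/

/-- The `a`-th block of the associated sequence. -/
def blk {k : ℕ} (S : SplayedSeq k) (a : ℕ) : List Chord :=
  if h : a < k + 1 then
    List.replicate (S.n ⟨a, h⟩) (piIdem (typeData S ⟨a, h⟩)) ++
      if h : a < k then [S.r ⟨a, h⟩] else []
  else []

theorem rho_eq {k : ℕ} (S : SplayedSeq k) :
    rhoList S = ((List.range (k + 1)).map (blk S)).flatten := by
  unfold rhoList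
  rw [← List.map_coe_finRange_eq_range, List.map_map]
  congr 1
  apply List.map_congr_left
  intro a _
  simp [blk, a.2]

theorem range_split (f : ℕ → List Chord) (i m : ℕ) :
    ((List.range (i + (2 + m))).map f).flatten =
      ((List.range i).map f).flatten ++ ((f i ++ f (i + 1)) ++
        ((List.range m).map (fun j => f (i + (2 + j)))).flatten) := by
  rw [List.range_add, List.range_add]
  simp [List.range_succ, Function.comp_def]

theorem Step_ctx {x y : List Chord} (p q : List Chord) (h : Step123 x y) :
    Step123 (p ++ (x ++ q)) (p ++ (y ++ q)) := by
  obtain ⟨pre, post, a, b, hab⟩ := h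
  have := Step123.mk (p ++ pre) (post ++ q) a b hab
  simpa using this

theorem blk_step {k : ℕ} (S S' : SplayedSeq k) (i : Fin k)
    (hb : ∀ a, a ≠ i.1 → a ≠ i.1 + 1 → blk S' a = blk S a)
    (hs : Step123 (blk S i.1 ++ blk S (i.1 + 1)) (blk S' i.1 ++ blk S' (i.1 + 1))) :
    Step123 (rhoList S) (rhoList S') := by
  rw [rho_eq, rho_eq]
  obtain ⟨m, hm⟩ : ∃ m, k + 1 = i.1 + (2 + m) := ⟨k + 1 - (i.1 + 2), by have := i.2; omega⟩
  rw [hm, range_split, range_split]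
  have e1 : (List.range i.1).map (blk S') = (List.range i.1).map (blk S) := by
    apply List.map_congr_left
    intro a ha
    rw [List.mem_range] at ha
    exact hb a (by omega) (by omega)
  have e2 : (fun j => blk S' (i.1 + (2 + j))) = (fun j => blk S (i.1 + (2 + j))) := by
    funext j
    exact hb _ (by omega) (by omega)
  rw [e1, e2]
  exact Step_ctx _ _ hs

/-- Replace the chord `r i` by `ρ₁₂₃` and decrease `n a`. -/
def red {k : ℕ} (S : SplayedSeq k) (i : Fin k) (a : Fin (k + 1))
    (h : S.r i = r1 ∨ S.r i = r3) : SplayedSeq k where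
  n := fun b => if b = a then S.n b - 1 else S.n b
  r := fun j => if j = i then r123 else S.r j
  jump := by
    intro j
    split_ifs
    · simp [Jumping, iotaStart, iotaEnd]
    · exact S.jump j
  coh := by
    have hs : iotaStart (S.r i) = Idem.m := by rcases h with h | h <;> rw [h] <;> rfl
    have he : iotaEnd (S.r i) = Idem.l := by rcases h with h | h <;> rw [h] <;> rfl
    intro j h1 h2
    have := S.coh j h1 h2
    split_ifs with h3 h4 h4
    · simp [← h3] at h4
    · rw [← this, h3, he]; rfl
    · rw [this, h4, hs]; rfl
    · exact this

theorem red_type {k : ℕ} (S : SplayedSeq k) (i : Fin k) (a : Fin (k + 1))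
    (h : S.r i = r1 ∨ S.r i = r3) : typeData (red S i a h) = typeData S := by
  have hs : iotaStart (S.r i) = Idem.m := by rcases h with h | h <;> rw [h] <;> rfl
  have he : iotaEnd (S.r i) = Idem.l := by rcases h with h | h <;> rw [h] <;> rfl
  have hk : 0 < k := by have := i.2; omega
  funext b
  by_cases hb : b.1 < k
  · obtain ⟨j, rfl⟩ : ∃ j : Fin k, b = j.castSucc := ⟨⟨b.1, hb⟩, rfl⟩
    rw [td_castSucc, td_castSucc]
    simp only [red]
    split_ifs with hj
    · rw [hj, hs]; rfl
    · rfl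
  · obtain ⟨j, rfl⟩ : ∃ j : Fin k, b = j.succ := by
      refine ⟨⟨k - 1, by omega⟩, Fin.ext ?_⟩
      have := b.2; simp; omega
    rw [td_succ, td_succ]
    simp only [red]
    split_ifs with hj
    · rw [hj, he]; rfl
    · rfl

theorem red_class {k : ℕ} (S : SplayedSeq k) (t : Fin (k + 1) → Idem) (i : Fin k)
    (a : Fin (k + 1)) (h : S.r i = r1 ∨ S.r i = r3) (ha : S.n a ≠ 0)
    (hB : Bclass k t i r123 = Bclass k t i (S.r i) + Hclass k t a) :
    totalClass k t (red S i a h) = totalClass k t S := by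
  unfold totalClass
  have e1 : ∀ b, (S.n b) • Hclass k t b =
      ((red S i a h).n b) • Hclass k t b + if b = a then Hclass k t a else 0 := by
    intro b
    simp only [red]
    split_ifs with hb
    · subst hb
      obtain ⟨m, hm⟩ := Nat.exists_eq_succ_of_ne_zero ha
      rw [hm, Nat.succ_sub_one, Nat.succ_eq_add_one, add_smul, one_smul]
    · simp
  have e2 : ∀ j, Bclass k t j ((red S i a h).r j) =
      Bclass k t j (S.r j) + if j = i then Hclass k t a else 0 := by
    intro j
    simp only [red]
    split_ifs with hj
    · subst hj; exact hB
    · simp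
  simp_rw [e1, e2, Finset.sum_add_distrib]
  simp
  abel

theorem red_blk {k : ℕ} (S : SplayedSeq k) (i : Fin k) (a : Fin (k + 1))
    (h : S.r i = r1 ∨ S.r i = r3) (b : ℕ) (hb : b ≠ i.1) (hb' : b ≠ a.1) :
    blk (red S i a h) b = blk S b := by
  unfold blk
  rw [red_type]
  simp [red, Fin.ext_iff, hb, hb']

theorem blk_cast {k : ℕ} (S : SplayedSeq k) (i : Fin k) :
    blk S i.1 = List.replicate (S.n i.castSucc) (piIdem (typeData S i.castSucc)) ++ [S.r i] := by
  have h : i.1 < k + 1 := by omega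
  simp only [blk, h, i.2, dif_pos]
  rfl

theorem blk_succ {k : ℕ} (S : SplayedSeq k) (i : Fin k) :
    blk S (i.1 + 1) = List.replicate (S.n i.succ) (piIdem (typeData S i.succ)) ++
      if h : i.1 + 1 < k then [S.r ⟨i.1 + 1, h⟩] else [] := by
  have h : i.1 + 1 < k + 1 := by omega
  simp only [blk, h, dif_pos]
  rfl

theorem step_of_not_LR {k : ℕ} (S : SplayedSeq k) (hS : ¬ LR S) :
    ∃ S' : SplayedSeq k, typeData S' = typeData S ∧
      totalClass k (typeData S) S' = totalClass k (typeData S) S ∧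
      Step123 (rhoList S) (rhoList S') := by
  unfold LR at hS
  push Not at hS
  obtain ⟨i, hi⟩ := hS
  have key : (S.r i = r1 ∧ S.n i.succ ≠ 0) ∨ (S.r i = r3 ∧ S.n i.castSucc ≠ 0) := by tauto
  rcases key with ⟨hr, hn⟩ | ⟨hr, hn⟩
  · have htl : typeData S i.succ = Idem.l := by rw [td_succ, hr]; rfl
    refine ⟨red S i i.succ (Or.inl hr), red_type _ _ _ _, red_class _ _ _ _ _ hn ?_, ?_⟩
    · rw [H_succ, htl, hr]; exact B_r1 _ _
    · apply blk_step S _ i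
      · intro a h1 h2
        exact red_blk _ _ _ _ _ h1 h2
      · rw [blk_cast, blk_cast, blk_succ, blk_succ, red_type, htl]
        obtain ⟨m, hm⟩ := Nat.exists_eq_succ_of_ne_zero hn
        have hne : ¬ i.castSucc = i.succ := by simp [Fin.ext_iff]
        have e : (if h : i.1 + 1 < k then [(red S i i.succ (Or.inl hr)).r ⟨i.1 + 1, h⟩] else [])
          = (if h : i.1 + 1 < k then [S.r ⟨i.1 + 1, h⟩] else []) := by
          simp [red, Fin.ext_iff]
        rw [e]
        generalize (if h : i.1 + 1 < k then [S.r ⟨i.1 + 1, h⟩] else []) = tl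
        simp only [red, if_true, hne, if_false, hm, hr, Nat.succ_sub_one, piIdem]
        have := Step123.mk (List.replicate (S.n i.castSucc) (piIdem (typeData S i.castSucc)))
          (List.replicate m r23 ++ tl) r1 r23 rfl
        simpa [List.replicate_succ, piIdem] using this
  · have htl : typeData S i.castSucc = Idem.m := by rw [td_castSucc, hr]; rfl
    refine ⟨red S i i.castSucc (Or.inr hr), red_type _ _ _ _, red_class _ _ _ _ _ hn ?_, ?_⟩
    · rw [H_castSucc, htl, hr]; exact B_r3 _ _
    · apply blk_step S _ i
      · intro a h1 h2
        exact red_blk _ _ _ _ _ h1 h1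
      · rw [red_blk S i i.castSucc (Or.inr hr) (i.1 + 1) (by omega) (by simp)]
        rw [blk_cast, blk_cast, red_type, htl]
        obtain ⟨m, hm⟩ := Nat.exists_eq_succ_of_ne_zero hn
        simp only [red, if_true, hm, hr, Nat.succ_sub_one, piIdem]
        have := Step123.mk (List.replicate m r12) (blk S (i.1 + 1)) r12 r3 rfl
        simpa [List.replicate_succ'] using this

/-- Non-composability of adjacent chords. -/
def NC (a b : Chord) : Prop := mul? a b ≠ some r123

theorem reduced_of_chain {l : List Chord} (h : l.IsChain NC) : Reduced123 l := by
  rintro t ⟨pre, post, a, b, hab⟩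
  rw [List.isChain_append] at h
  have h2 := h.2.1
  rw [List.isChain_cons_cons] at h2
  exact h2.1 hab

theorem chain_rep (n : ℕ) (τ : Idem) : (List.replicate n (piIdem τ)).IsChain NC := by
  apply List.isChain_replicate_of_rel
  cases τ <;> simp [NC, piIdem, mul?]

theorem chain_upto {k : ℕ} (S : SplayedSeq k) (hS : LR S) (j : ℕ) (hj : j ≤ k) :
    (((List.range j).map (blk S)).flatten).IsChain NC ∧
      ∀ x ∈ (((List.range j).map (blk S)).flatten).getLast?,
        ∃ i : Fin k, i.1 + 1 = j ∧ x = S.r i := by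
  induction j with
  | zero => simp
  | succ j ih =>
    obtain ⟨ih1, ih2⟩ := ih (by omega)
    rw [List.range_succ]
    simp only [List.map_append, List.flatten_append, List.map_cons, List.map_nil,
      List.flatten_cons, List.flatten_nil, List.append_nil]
    have hb := blk_cast S ⟨j, hj⟩
    simp only at hb
    constructor
    · rw [List.isChain_append]
      refine ⟨ih1, ?_, ?_⟩
      · rw [hb, List.isChain_append]
        refine ⟨chain_rep _ _, by simp, ?_⟩
        intro x hx y hy
        simp at hy
        subst hy
        have hx := List.mem_of_mem_getLast? hx
        rw [List.mem_replicate] at hx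
        obtain ⟨hx1, rfl⟩ := hx
        rw [td_castSucc]
        have hl := (hS ⟨j, hj⟩).2
        have hjj := S.jump ⟨j, hj⟩
        cases h : S.r ⟨j, hj⟩ <;> simp_all [NC, iotaStart, iotaEnd, Jumping, piIdem, mul?]
      · intro x hx y hy
        obtain ⟨i, hi, rfl⟩ := ih2 x hx
        subst hi
        have hl := (hS i).1
        have hc := S.coh i.1 i.2 hj
        have h1 := S.jump i
        have h2 := S.jump ⟨i.1 + 1, hj⟩
        have hn : (Fin.castSucc ⟨i.1 + 1, hj⟩ : Fin (k + 1)) = i.succ := rfl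
        rw [hb, hn, td_succ] at hy
        have hy : y = S.r ⟨i.1 + 1, hj⟩ ∨ (S.n i.succ ≠ 0 ∧ y = piIdem (iotaEnd (S.r i))) := by
          have := List.mem_of_mem_head? hy
          rw [List.mem_append, List.mem_replicate, List.mem_singleton] at this
          tauto
        simp only [Fin.eta] at hc
        rcases hy with rfl | ⟨hy1, rfl⟩
        · clear hy hx hb ih1 ih2 ih hl
          generalize S.r i = c at *
          generalize S.r ⟨i.1 + 1, hj⟩ = d at *
          cases c <;> cases d <;>
            simp [NC, iotaStart, iotaEnd, Jumping, mul?] at hc h1 h2 ⊢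
        · clear hx hb ih1 ih2 ih hc h2
          generalize S.r i = c at *
          cases c <;>
            simp [NC, iotaStart, iotaEnd, Jumping, piIdem, mul?] at h1 hl ⊢
          exact hy1 hl
    · intro x hx
      rw [hb, ← List.append_assoc, List.getLast?_append] at hx
      simp at hx
      exact ⟨⟨j, hj⟩, rfl, hx.symm⟩

theorem reduced_of_LR {k : ℕ} (S : SplayedSeq k) (hS : LR S) : Reduced123 (rhoList S) := by
  apply reduced_of_chain
  obtain ⟨h1, h2⟩ := chain_upto S hS k le_rfl
  rw [rho_eq, List.range_succ]
  simp only [List.map_append, List.flatten_append, List.map_cons, List.map_nil,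
    List.flatten_cons, List.flatten_nil, List.append_nil]
  rw [List.isChain_append]
  have hb : blk S k = List.replicate (S.n (Fin.last k)) (piIdem (typeData S (Fin.last k))) := by
    simp [blk, Fin.last]
  rw [hb]
  refine ⟨h1, chain_rep _ _, ?_⟩
  intro x hx y hy
  obtain ⟨i, hi, rfl⟩ := h2 x hx
  have hlast : Fin.last k = i.succ := Fin.ext (by simp [hi])
  have hy := List.mem_of_mem_head? hy
  rw [List.mem_replicate, hlast, td_succ] at hy
  obtain ⟨hy1, rfl⟩ := hy
  have hl := (hS i).1
  have hj := S.jump i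
  cases h : S.r i <;> simp_all [NC, iotaStart, iotaEnd, Jumping, piIdem, mul?]

theorem LR_of_reduced {k : ℕ} (S : SplayedSeq k) (hS : Reduced123 (rhoList S)) : LR S := by
  by_contra h
  obtain ⟨S', _, _, h3⟩ := step_of_not_LR S h
  exact hS _ h3

theorem Step_length {x y : List Chord} (h : Step123 x y) : y.length < x.length := by
  obtain ⟨pre, post, a, b, hab⟩ := h
  simp

theorem exists_LR {k : ℕ} (N : ℕ) : ∀ S : SplayedSeq k, (rhoList S).length ≤ N →
    ∃ U : SplayedSeq k, typeData U = typeData S ∧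
      totalClass k (typeData S) U = totalClass k (typeData S) S ∧ LR U ∧
      Relation.ReflTransGen Step123 (rhoList S) (rhoList U) := by
  induction N with
  | zero =>
    intro S hN
    by_cases hS : LR S
    · exact ⟨S, rfl, rfl, hS, Relation.ReflTransGen.refl⟩
    · obtain ⟨S', _, _, h3⟩ := step_of_not_LR S hS
      have := Step_length h3
      omega
  | succ N ih =>
    intro S hN
    by_cases hS : LR S
    · exact ⟨S, rfl, rfl, hS, Relation.ReflTransGen.refl⟩
    · obtain ⟨S', h1, h2, h3⟩ := step_of_not_LR S hS
      have := Step_length h3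
      obtain ⟨U, u1, u2, u3, u4⟩ := ih S' (by omega)
      rw [h1] at u1 u2
      exact ⟨U, u1, u2.trans h2, u3, Relation.ReflTransGen.head h3 u4⟩

end Splayed

/-- For every splayed sequence of Reeb domains `S` there is a unique splayed sequence of
Reeb domains `U` with the same length and type data whose total class in `G` agrees with
that of `S` and whose associated sequence of Reeb chords is 123-reduced; moreover the
associated sequence of Reeb chords of `U` is the 123-reduction of that of `S` (it is a
123-reduced sequence reachable from `ρ(S)` by 123-reduction steps). -/
theorem exists_unique_reduced_splayedSeq (k : ℕ) (hk : 0 < k) (S : SplayedSeq k) :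
    (∃! U : SplayedSeq k, typeData U = typeData S ∧
        totalClass k (typeData S) U = totalClass k (typeData S) S ∧
        Reduced123 (rhoList U)) ∧
    (∀ U : SplayedSeq k, (typeData U = typeData S ∧
        totalClass k (typeData S) U = totalClass k (typeData S) S ∧
        Reduced123 (rhoList U)) →
      Relation.ReflTransGen Step123 (rhoList S) (rhoList U)) := by
  obtain ⟨U, u1, u2, u3, u4⟩ := Splayed.exists_LR (rhoList S).length S le_rfl
  have huniq : ∀ V : SplayedSeq k, (typeData V = typeData S ∧
        totalClass k (typeData S) V = totalClass k (typeData S) S ∧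
        Reduced123 (rhoList V)) → V = U := by
    rintro V ⟨v1, v2, v3⟩
    exact Splayed.LR_unique hk V U (typeData S) v1 u1 (v2.trans u2.symm)
      (Splayed.LR_of_reduced V v3) u3
  refine ⟨⟨U, ⟨u1, u2, Splayed.reduced_of_LR U u3⟩, huniq⟩, ?_⟩
  intro V hV
  rw [huniq V hV]
  exact u4
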